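/- Let L > 0 and let q_e : 𝕋_L → ℝ be smooth with q_e > 0. Define Φ(Q,ω) := (1/(ωε)) · ( ∫₀^∞ y ∫₀^L f(Q(s,y), s; ω) ds dy ) / ( (1/L)∫₀^L q_e(s)³ ds ), where f(Q,s;ω) := (1 − ω q_e(s)/√(ω² q_e(s)² + Q)) ∂_s Q. Fix C₀ > 0. There exists ε₀ ∈ (0,1), depending only on q_e, L, C₀, such that for all 0 < ε < ε₀ the following holds. Let ω₁, ω₂ ∈ [1/2, 2] and ω̄₁, ω̄₂ ∈ ℝ with ω_j² = 1 − ε ω̄_j and |ω̄_j| ≤ C₀ for j = 1, 2, and let Q₁, Q₂ be smooth on 𝕋_L × [0,∞) with ‖Q_j‖_{X_{2,50}} ≤ ε^{0.99}. Then |Φ(Q₁,ω₁) − Φ(Q₂,ω₂)| ≤ ε^{1.97} |ω̄₁ − ω̄₂| + ε^{−0.02} ‖Q₁ − Q₂‖_{X_{1,4}}. -/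

import Mathlib

open MeasureTheory Set Function Filter

/-- `k`-th partial derivative in the tangential variable `s` of a function on
`𝕋_L × [0,∞)` (represented as a curried function `ℝ → ℝ → ℝ`). -/
noncomputable def dS (k : ℕ) (h : ℝ → ℝ → ℝ) : ℝ → ℝ → ℝ :=
  fun s ψ => iteratedDeriv k (fun s' => h s' ψ) s

/-- `j`-th partial derivative in the normal (von Mises) variable `ψ`. -/
noncomputable def dPsi (j : ℕ) (h : ℝ → ℝ → ℝ) : ℝ → ℝ → ℝ :=
  fun s ψ => iteratedDeriv j (fun ψ' => h s ψ') ψ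

/-- Squared `L²` norm over `𝕋_L × ℝ₊` (fundamental domain `(0,L] × (0,∞)`). -/
noncomputable def L2sq (L : ℝ) (h : ℝ → ℝ → ℝ) : ℝ :=
  ∫ p in Ioc (0:ℝ) L ×ˢ Ioi (0:ℝ), (h p.1 p.2) ^ 2

/-- Square-integrability over `𝕋_L × ℝ₊`. -/
def FiniteL2 (L : ℝ) (h : ℝ → ℝ → ℝ) : Prop :=
  IntegrableOn (fun p : ℝ × ℝ => (h p.1 p.2) ^ 2) (Ioc (0:ℝ) L ×ˢ Ioi (0:ℝ))

/-- The weight `⟨ψ⟩^m h`. -/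
noncomputable def wt (m : ℕ) (h : ℝ → ℝ → ℝ) : ℝ → ℝ → ℝ :=
  fun s ψ => (1 + ψ) ^ m * h s ψ

/-- Squared `X_{k,m}` norm:
`‖h‖²_{X_{k,m}} = Σ_{k'≤k} Σ_{m'≤m} (‖⟨ψ⟩^{m'}∂_s^{k'}h‖² + ‖⟨ψ⟩^{m'}∂_s^{k'+1}h‖²
+ ‖⟨ψ⟩^{m'}∂_ψ∂_s^{k'}h‖² + ‖⟨ψ⟩^{m'}∂_ψ²∂_s^{k'}h‖²)`. -/
noncomputable def XnormSq (L : ℝ) (k m : ℕ) (h : ℝ → ℝ → ℝ) : ℝ :=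
  ∑ k' ∈ Finset.range (k+1), ∑ m' ∈ Finset.range (m+1),
    (L2sq L (wt m' (dS k' h)) + L2sq L (wt m' (dS (k'+1) h))
      + L2sq L (wt m' (dPsi 1 (dS k' h))) + L2sq L (wt m' (dPsi 2 (dS k' h))))

/-- The `X_{k,m}` norm. -/
noncomputable def Xnorm (L : ℝ) (k m : ℕ) (h : ℝ → ℝ → ℝ) : ℝ :=
  Real.sqrt (XnormSq L k m h)

/-- Membership in the space `X_{k,m}`: all the defining integrands are integrable. -/
def XFinite (L : ℝ) (k m : ℕ) (h : ℝ → ℝ → ℝ) : Prop :=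
  ∀ k' ≤ k, ∀ m' ≤ m,
    FiniteL2 L (wt m' (dS k' h)) ∧ FiniteL2 L (wt m' (dS (k'+1) h))
      ∧ FiniteL2 L (wt m' (dPsi 1 (dS k' h))) ∧ FiniteL2 L (wt m' (dPsi 2 (dS k' h)))

/-- Joint smoothness of a curried function of two real variables. -/
def Smooth2 (h : ℝ → ℝ → ℝ) : Prop :=
  ContDiff ℝ (⊤ : ℕ∞) (fun p : ℝ × ℝ => h p.1 p.2)

/-- Periodicity in the first (tangential) variable. -/
def PeriodicS (L : ℝ) (h : ℝ → ℝ → ℝ) : Prop :=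
  ∀ ψ : ℝ, Function.Periodic (fun s => h s ψ) L

/-- Squared `H^n` norm of a function on `𝕋_L`. -/
noncomputable def HnormSq (L : ℝ) (n : ℕ) (b : ℝ → ℝ) : ℝ :=
  ∑ j ∈ Finset.range (n+1), ∫ s in (0:ℝ)..L, (iteratedDeriv j b s) ^ 2

/-- The implicit part of the Feynman–Lagerstrom selection functional. -/
noncomputable def PhiFL (L : ℝ) (q_e : ℝ → ℝ) (ε : ℝ) (Q : ℝ → ℝ → ℝ) (ω : ℝ) : ℝ :=
  (1 / (ω * ε)) *
    ((∫ y in Ioi (0:ℝ), y * ∫ s in (0:ℝ)..L,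
        (1 - ω * q_e s / Real.sqrt (ω ^ 2 * (q_e s) ^ 2 + Q s y)) * dS 1 Q s y)
      / ((1/L) * ∫ s in (0:ℝ)..L, (q_e s) ^ 3))

/-!
Writing `u = √(ω²q² + Q)`, the coefficient `1/ω - q/u` of `∂_s Q` in the integrand of `Φ` equals
`ω⁻¹ (1 - (1 + Q/(ωq)²)^{-1/2})`. It vanishes at `Q = 0` and is Lipschitz in `Q` and, with a
constant proportional to `|Q|`, in `ω`, as long as `Q` is pointwise small compared with `min q²`; a
Sobolev embedding on the strip guarantees this. Hence each term of the difference of two integrands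
is a product of two square-integrable factors: `|ω₁ - ω₂| |Q₁| |∂_s Q₁|`, `|Q₁ - Q₂| |∂_s Q₁|` and
`|Q₂| |∂_s (Q₁ - Q₂)|`. The weight `y` is put on a factor `Q_j` or `∂_s Q₁`, and Cauchy–Schwarz
gives a bound by `|ω₁ - ω₂| ε^{1.98} + ε^{0.99} ‖Q₁ - Q₂‖`, up to constants. Since
`|ω₁ - ω₂| ≤ ε |ω̄₁ - ω̄₂|`, dividing by `ε` leaves
`ε^{1.98} |ω̄₁ - ω̄₂| + ε^{-0.01} ‖Q₁ - Q₂‖`, and the spare factor `ε^{0.01}` absorbs the constants.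
-/

section Kernel

/-- The coefficient `1/ω - q/u`, with velocity `u = √(ω²q² + z)`, of `∂_s Q` in `f(Q, s; ω) / ω`,
where `q = q_e(s)` and `z = Q(s, y)`. -/
noncomputable def phiKernel (q ω z : ℝ) : ℝ :=
  1 / ω - q / √(ω ^ 2 * q ^ 2 + z)

lemma abs_inv_sqrt_one_add_sub_le {x y : ℝ} (hx : -(1 / 2) ≤ x) (hy : -(1 / 2) ≤ y) :
    |(√(1 + x))⁻¹ - (√(1 + y))⁻¹| ≤ 4 * |x - y| := by
  have half_le_sqrt {t : ℝ} (ht : -(1 / 2) ≤ t) : 1 / 2 ≤ √(1 + t) :=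
    Real.le_sqrt_of_sq_le (by linarith)
  have hx_sq : √(1 + x) ^ 2 = 1 + x := Real.sq_sqrt (by linarith)
  have hy_sq : √(1 + y) ^ 2 = 1 + y := Real.sq_sqrt (by linarith)
  have hx_half := half_le_sqrt hx
  have hy_half := half_le_sqrt hy
  set r := √(1 + x)
  set t := √(1 + y)
  have rationalized : r⁻¹ - t⁻¹ = (y - x) / (r * t * (r + t)) := by
    rw [show y - x = (t - r) * (r + t) by linear_combination hx_sq - hy_sq]
    field_simp
  have denom_ge : 1 / 4 ≤ r * t * (r + t) :=
    calc (1 / 4 : ℝ) = 1 / 2 * (1 / 2) * (1 / 2 + 1 / 2) := by norm_num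
      _ ≤ r * t * (r + t) := by gcongr
  rw [rationalized, abs_div, abs_sub_comm y x, abs_of_pos (a := r * t * (r + t)) (by positivity),
    div_le_iff₀ (by positivity)]
  nlinarith [abs_nonneg (x - y)]

lemma phiKernel_eq {q ω : ℝ} (hq : 0 < q) (hω : 0 < ω) (z : ℝ) :
    phiKernel q ω z = ω⁻¹ * (1 - (√(1 + z / (ω * q) ^ 2))⁻¹) := by
  have factored : √(ω ^ 2 * q ^ 2 + z) = ω * q * √(1 + z / (ω * q) ^ 2) := by
    rw [← Real.sqrt_sq (mul_pos hω hq).le, ← Real.sqrt_mul (sq_nonneg _),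
      Real.sqrt_sq (by positivity)]
    congr 1
    field_simp
  rw [phiKernel, factored]
  field_simp

variable {m q ω ω₁ ω₂ z z₁ z₂ : ℝ}

lemma abs_div_mul_sq_le (hm : 0 < m) (hq : m ≤ q) (hω : 1 / 2 ≤ ω) (z : ℝ) :
    |z / (ω * q) ^ 2| ≤ 4 / m ^ 2 * |z| := by
  calc |z / (ω * q) ^ 2| = |z| / (ω * q) ^ 2 := by rw [abs_div, abs_sq]
    _ ≤ |z| / (1 / 2 * m) ^ 2 := by gcongr
    _ = 4 / m ^ 2 * |z| := by field_simp; norm_num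

lemma neg_half_le_div_mul_sq (hm : 0 < m) (hq : m ≤ q) (hω : 1 / 2 ≤ ω) (hz : |z| ≤ m ^ 2 / 8) :
    -(1 / 2) ≤ z / (ω * q) ^ 2 :=
  neg_le_of_abs_le <|
    calc |z / (ω * q) ^ 2| ≤ 4 / m ^ 2 * |z| := abs_div_mul_sq_le hm hq hω z
      _ ≤ 4 / m ^ 2 * (m ^ 2 / 8) := by gcongr
      _ = 1 / 2 := by field_simp; norm_num

lemma abs_phiKernel_sub_le (hm : 0 < m) (hq : m ≤ q) (hω : 1 / 2 ≤ ω)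
    (hz₁ : |z₁| ≤ m ^ 2 / 8) (hz₂ : |z₂| ≤ m ^ 2 / 8) :
    |phiKernel q ω z₁ - phiKernel q ω z₂| ≤ 32 / m ^ 2 * |z₁ - z₂| := by
  have hω₀ : 0 < ω := by linarith
  have hω_inv : ω⁻¹ ≤ 2 := by simpa using inv_anti₀ (by norm_num) hω
  rw [phiKernel_eq (hm.trans_le hq) hω₀, phiKernel_eq (hm.trans_le hq) hω₀, ← mul_sub,
    sub_sub_sub_cancel_left, abs_mul, abs_of_pos (inv_pos.2 hω₀), abs_sub_comm]
  calc ω⁻¹ * |(√(1 + z₁ / (ω * q) ^ 2))⁻¹ - (√(1 + z₂ / (ω * q) ^ 2))⁻¹|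
      ≤ 2 * (4 * |z₁ / (ω * q) ^ 2 - z₂ / (ω * q) ^ 2|) := by
        gcongr
        exact abs_inv_sqrt_one_add_sub_le (neg_half_le_div_mul_sq hm hq hω hz₁)
          (neg_half_le_div_mul_sq hm hq hω hz₂)
    _ ≤ 2 * (4 * (4 / m ^ 2 * |z₁ - z₂|)) := by
        rw [← sub_div]
        gcongr
        exact abs_div_mul_sq_le hm hq hω _
    _ = 32 / m ^ 2 * |z₁ - z₂| := by ring

lemma abs_phiKernel_le (hm : 0 < m) (hq : m ≤ q) (hω : 1 / 2 ≤ ω) (hz : |z| ≤ m ^ 2 / 8) :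
    |phiKernel q ω z| ≤ 32 / m ^ 2 * |z| := by
  have at_zero : phiKernel q ω 0 = 0 := by
    simp [phiKernel_eq (hm.trans_le hq) (by linarith : 0 < ω)]
  simpa [at_zero] using
    abs_phiKernel_sub_le hm hq hω hz (z₂ := 0) (by rw [abs_zero]; positivity)

lemma abs_inv_sub_inv_le (hω₁ : 1 / 2 ≤ ω₁) (hω₂ : 1 / 2 ≤ ω₂) :
    |ω₁⁻¹ - ω₂⁻¹| ≤ 4 * |ω₁ - ω₂| := by
  have h₁ : 0 < ω₁ := by linarith
  have h₂ : 0 < ω₂ := by linarith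
  rw [inv_sub_inv h₁.ne' h₂.ne', abs_div, abs_sub_comm, abs_of_pos (mul_pos h₁ h₂),
    div_le_iff₀ (mul_pos h₁ h₂)]
  have : 1 ≤ 4 * (ω₁ * ω₂) := by nlinarith
  nlinarith [abs_nonneg (ω₁ - ω₂)]

lemma abs_div_mul_sq_sub_le (hm : 0 < m) (hq : m ≤ q) (hω₁ : 1 / 2 ≤ ω₁) (hω₂ : 1 / 2 ≤ ω₂)
    (z : ℝ) : |z / (ω₁ * q) ^ 2 - z / (ω₂ * q) ^ 2| ≤ 16 / m ^ 2 * (|ω₁ - ω₂| * |z|) := by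
  have h₁ : ω₁⁻¹ ≤ 2 := by simpa using inv_anti₀ (by norm_num) hω₁
  have h₂ : ω₂⁻¹ ≤ 2 := by simpa using inv_anti₀ (by norm_num) hω₂
  have hsum : 0 ≤ ω₁⁻¹ + ω₂⁻¹ := by positivity
  calc |z / (ω₁ * q) ^ 2 - z / (ω₂ * q) ^ 2|
      = |ω₁⁻¹ - ω₂⁻¹| * (ω₁⁻¹ + ω₂⁻¹) * (|z| / q ^ 2) := by
        rw [← abs_of_nonneg hsum, ← abs_sq q, ← abs_div, ← abs_mul, ← abs_mul]
        congr 1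
        ring
    _ ≤ 4 * |ω₁ - ω₂| * (2 + 2) * (|z| / m ^ 2) := by
        gcongr
        exact abs_inv_sub_inv_le hω₁ hω₂
    _ = 16 / m ^ 2 * (|ω₁ - ω₂| * |z|) := by ring

lemma abs_phiKernel_sub_le_of_omega (hm : 0 < m) (hq : m ≤ q) (hω₁ : 1 / 2 ≤ ω₁)
    (hω₂ : 1 / 2 ≤ ω₂) (hz : |z| ≤ m ^ 2 / 8) :
    |phiKernel q ω₁ z - phiKernel q ω₂ z| ≤ 192 / m ^ 2 * (|ω₁ - ω₂| * |z|) := by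
  have hq₀ : 0 < q := hm.trans_le hq
  have hω₂_inv : ω₂⁻¹ ≤ 2 := by simpa using inv_anti₀ (by norm_num) hω₂
  have hx₁ := neg_half_le_div_mul_sq hm hq hω₁ hz
  have hx₂ := neg_half_le_div_mul_sq hm hq hω₂ hz
  have h_inv := abs_inv_sub_inv_le hω₁ hω₂
  have h_abs := abs_div_mul_sq_le hm hq hω₁ z
  have h_sub := abs_div_mul_sq_sub_le hm hq hω₁ hω₂ z
  rw [phiKernel_eq hq₀ (by linarith), phiKernel_eq hq₀ (by linarith)]
  set x₁ := z / (ω₁ * q) ^ 2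
  set x₂ := z / (ω₂ * q) ^ 2
  have h_one : |1 - (√(1 + x₁))⁻¹| ≤ 4 * |x₁| := by
    simpa [abs_sub_comm] using abs_inv_sqrt_one_add_sub_le hx₁ (y := 0) (by norm_num)
  calc |ω₁⁻¹ * (1 - (√(1 + x₁))⁻¹) - ω₂⁻¹ * (1 - (√(1 + x₂))⁻¹)|
      = |(ω₁⁻¹ - ω₂⁻¹) * (1 - (√(1 + x₁))⁻¹) - ω₂⁻¹ * ((√(1 + x₁))⁻¹ - (√(1 + x₂))⁻¹)| := by
        congr 1
        ring
    _ ≤ |ω₁⁻¹ - ω₂⁻¹| * |1 - (√(1 + x₁))⁻¹| + ω₂⁻¹ * |(√(1 + x₁))⁻¹ - (√(1 + x₂))⁻¹| := by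
        refine (abs_sub _ _).trans_eq ?_
        rw [abs_mul, abs_mul, abs_of_nonneg (a := ω₂⁻¹) (by positivity)]
    _ ≤ 4 * |ω₁ - ω₂| * (4 * (4 / m ^ 2 * |z|)) +
          2 * (4 * (16 / m ^ 2 * (|ω₁ - ω₂| * |z|))) := by
        gcongr
        · exact h_one.trans (by gcongr)
        · exact (abs_inv_sqrt_one_add_sub_le hx₁ hx₂).trans (by gcongr)
    _ = 192 / m ^ 2 * (|ω₁ - ω₂| * |z|) := by ring

lemma abs_phiKernel_mul_sub_le (hm : 0 < m) (hq : m ≤ q) (hω₁ : 1 / 2 ≤ ω₁) (hω₂ : 1 / 2 ≤ ω₂)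
    (hz₁ : |z₁| ≤ m ^ 2 / 8) (hz₂ : |z₂| ≤ m ^ 2 / 8) (u₁ u₂ : ℝ) :
    |phiKernel q ω₁ z₁ * u₁ - phiKernel q ω₂ z₂ * u₂| ≤
      192 / m ^ 2 * (|ω₁ - ω₂| * (|z₁| * |u₁|) + |z₁ - z₂| * |u₁| + |z₂| * |u₁ - u₂|) := by
  have hm_const : 32 / m ^ 2 ≤ 192 / m ^ 2 := by gcongr; norm_num
  have h_omega := abs_phiKernel_sub_le_of_omega hm hq hω₁ hω₂ hz₁
  have h_arg : |phiKernel q ω₂ z₁ - phiKernel q ω₂ z₂| ≤ 192 / m ^ 2 * |z₁ - z₂| :=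
    (abs_phiKernel_sub_le hm hq hω₂ hz₁ hz₂).trans (by gcongr)
  have h_size : |phiKernel q ω₂ z₂| ≤ 192 / m ^ 2 * |z₂| :=
    (abs_phiKernel_le hm hq hω₂ hz₂).trans (by gcongr)
  calc |phiKernel q ω₁ z₁ * u₁ - phiKernel q ω₂ z₂ * u₂|
      = |(phiKernel q ω₁ z₁ - phiKernel q ω₂ z₁) * u₁ +
          (phiKernel q ω₂ z₁ - phiKernel q ω₂ z₂) * u₁ + phiKernel q ω₂ z₂ * (u₁ - u₂)| := by
        congr 1
        ring
    _ ≤ |phiKernel q ω₁ z₁ - phiKernel q ω₂ z₁| * |u₁| +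
          |phiKernel q ω₂ z₁ - phiKernel q ω₂ z₂| * |u₁| + |phiKernel q ω₂ z₂| * |u₁ - u₂| := by
        simp only [← abs_mul]
        exact abs_add_three _ _ _
    _ ≤ 192 / m ^ 2 * (|ω₁ - ω₂| * |z₁|) * |u₁| + 192 / m ^ 2 * |z₁ - z₂| * |u₁| +
          192 / m ^ 2 * |z₂| * |u₁ - u₂| := by gcongr
    _ = _ := by ring

end Kernel

section PartialDerivatives

variable {h g : ℝ → ℝ → ℝ}

lemma dS_zero (h : ℝ → ℝ → ℝ) : dS 0 h = h := by
  funext s y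
  simp [dS]

lemma Smooth2.contDiff_two (hh : Smooth2 h) : ContDiff ℝ 2 (uncurry h) :=
  mod_cast contDiff_infty.1 hh 2

lemma hasDerivAt_fderiv_fst (hh : Differentiable ℝ (uncurry h)) (s y : ℝ) :
    HasDerivAt (fun t => h t y) (fderiv ℝ (uncurry h) (s, y) (1, 0)) s :=
  (hh (s, y)).hasFDerivAt.comp_hasDerivAt (f := fun t => (t, y)) s
    ((hasDerivAt_id s).prodMk (hasDerivAt_const s y))

lemma hasDerivAt_fderiv_snd (hh : Differentiable ℝ (uncurry h)) (s y : ℝ) :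
    HasDerivAt (fun t => h s t) (fderiv ℝ (uncurry h) (s, y) (0, 1)) y :=
  (hh (s, y)).hasFDerivAt.comp_hasDerivAt y ((hasDerivAt_const y s).prodMk (hasDerivAt_id y))

lemma dS_one_eq_fderiv (hh : Differentiable ℝ (uncurry h)) (s y : ℝ) :
    dS 1 h s y = fderiv ℝ (uncurry h) (s, y) (1, 0) := by
  rw [dS, iteratedDeriv_one, (hasDerivAt_fderiv_fst hh s y).deriv]

lemma dPsi_one_eq_fderiv (hh : Differentiable ℝ (uncurry h)) (s y : ℝ) :
    dPsi 1 h s y = fderiv ℝ (uncurry h) (s, y) (0, 1) := by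
  rw [dPsi, iteratedDeriv_one, (hasDerivAt_fderiv_snd hh s y).deriv]

lemma hasDerivAt_dS_one (hh : Differentiable ℝ (uncurry h)) (s y : ℝ) :
    HasDerivAt (fun t => h t y) (dS 1 h s y) s := by
  simpa only [dS_one_eq_fderiv hh] using hasDerivAt_fderiv_fst hh s y

lemma hasDerivAt_dPsi_one (hh : Differentiable ℝ (uncurry h)) (s y : ℝ) :
    HasDerivAt (fun t => h s t) (dPsi 1 h s y) y := by
  simpa only [dPsi_one_eq_fderiv hh] using hasDerivAt_fderiv_snd hh s y

lemma contDiff_dS_one {n : ℕ} (hh : ContDiff ℝ (n + 1) (uncurry h)) :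
    ContDiff ℝ n (uncurry (dS 1 h)) := by
  have : uncurry (dS 1 h) = fun p => fderiv ℝ (uncurry h) p (1, 0) :=
    funext fun p => dS_one_eq_fderiv (hh.differentiable (by simp)) p.1 p.2
  rw [this]
  exact (hh.fderiv_right le_rfl).clm_apply contDiff_const

lemma continuous_dS_one (hh : ContDiff ℝ 1 (uncurry h)) : Continuous (uncurry (dS 1 h)) :=
  (contDiff_dS_one (n := 0) (by simpa using hh)).continuous

lemma continuous_dPsi_one (hh : ContDiff ℝ 1 (uncurry h)) : Continuous (uncurry (dPsi 1 h)) := by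
  have : uncurry (dPsi 1 h) = fun p => fderiv ℝ (uncurry h) p (0, 1) :=
    funext fun p => dPsi_one_eq_fderiv (hh.differentiable one_ne_zero) p.1 p.2
  rw [this]
  exact (hh.continuous_fderiv one_ne_zero).clm_apply continuous_const

lemma dS_one_sub (hh : Differentiable ℝ (uncurry h)) (hg : Differentiable ℝ (uncurry g)) (s y : ℝ) :
    dS 1 (fun s y => h s y - g s y) s y = dS 1 h s y - dS 1 g s y := by
  rw [dS, iteratedDeriv_one]
  exact ((hasDerivAt_dS_one hh s y).sub (hasDerivAt_dS_one hg s y)).deriv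

end PartialDerivatives

section SquareIntegrable

/-- Lebesgue measure on the fundamental domain `(0, L] × (0, ∞)` of `𝕋_L × ℝ₊`. -/
noncomputable abbrev stripMeasure (L : ℝ) : Measure (ℝ × ℝ) :=
  volume.restrict (Ioc 0 L ×ˢ Ioi 0)

variable {L : ℝ} {h g : ℝ → ℝ → ℝ}

lemma FiniteL2.memLp (hh : FiniteL2 L h) (hc : Continuous (uncurry h)) :
    MemLp (uncurry h) 2 (stripMeasure L) :=
  (memLp_two_iff_integrable_sq hc.aestronglyMeasurable).2 hh

lemma L2sq_nonneg (L : ℝ) (h : ℝ → ℝ → ℝ) : 0 ≤ L2sq L h :=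
  integral_nonneg fun _ => sq_nonneg _

lemma integrable_abs_mul_abs (hh : MemLp (uncurry h) 2 (stripMeasure L))
    (hg : MemLp (uncurry g) 2 (stripMeasure L)) :
    Integrable (fun p => |uncurry h p| * |uncurry g p|) (stripMeasure L) :=
  hh.abs.integrable_mul hg.abs

lemma integral_abs_mul_abs_le (hh : MemLp (uncurry h) 2 (stripMeasure L))
    (hg : MemLp (uncurry g) 2 (stripMeasure L)) :
    ∫ p, |uncurry h p| * |uncurry g p| ∂stripMeasure L ≤ √(L2sq L h) * √(L2sq L g) := by
  have holder := integral_mul_le_Lp_mul_Lq_of_nonneg Real.HolderConjugate.two_two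
    (ae_of_all _ fun p => abs_nonneg (uncurry h p)) (ae_of_all _ fun p => abs_nonneg (uncurry g p))
    (by simpa using! hh.abs) (by simpa using! hg.abs)
  simpa [L2sq, Real.sqrt_eq_rpow, uncurry] using holder

lemma wt_zero (h : ℝ → ℝ → ℝ) : wt 0 h = h := by
  funext s y
  simp [wt]

lemma continuous_wt (m : ℕ) (hc : Continuous (uncurry h)) : Continuous (uncurry (wt m h)) :=
  ((continuous_const.add continuous_snd).pow m).mul hc

lemma abs_wt_one {s y : ℝ} (h : ℝ → ℝ → ℝ) (hy : 0 < y) : |wt 1 h s y| = (1 + y) * |h s y| := by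
  rw [wt, pow_one, abs_mul, abs_of_pos (by positivity)]

end SquareIntegrable

section XSpace

variable {L : ℝ} {k k' m m' : ℕ} {h g : ℝ → ℝ → ℝ}

/-- The `(k, m)` term of the double sum defining `XnormSq`. -/
noncomputable def XtermSq (L : ℝ) (k m : ℕ) (h : ℝ → ℝ → ℝ) : ℝ :=
  L2sq L (wt m (dS k h)) + L2sq L (wt m (dS (k + 1) h))
    + L2sq L (wt m (dPsi 1 (dS k h))) + L2sq L (wt m (dPsi 2 (dS k h)))

lemma XtermSq_nonneg (L : ℝ) (k m : ℕ) (h : ℝ → ℝ → ℝ) : 0 ≤ XtermSq L k m h :=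
  add_nonneg (add_nonneg (add_nonneg (L2sq_nonneg _ _) (L2sq_nonneg _ _)) (L2sq_nonneg _ _))
    (L2sq_nonneg _ _)

lemma XnormSq_eq_sum (L : ℝ) (k m : ℕ) (h : ℝ → ℝ → ℝ) :
    XnormSq L k m h =
      ∑ p ∈ Finset.range (k + 1) ×ˢ Finset.range (m + 1), XtermSq L p.1 p.2 h :=
  (Finset.sum_product' _ _ _).symm

lemma Xnorm_nonneg (L : ℝ) (k m : ℕ) (h : ℝ → ℝ → ℝ) : 0 ≤ Xnorm L k m h :=
  Real.sqrt_nonneg _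

lemma Xnorm_mono (hk : k' ≤ k) (hm : m' ≤ m) : Xnorm L k' m' h ≤ Xnorm L k m h := by
  refine Real.sqrt_le_sqrt ?_
  rw [XnormSq_eq_sum, XnormSq_eq_sum]
  exact Finset.sum_le_sum_of_subset_of_nonneg
    (Finset.product_subset_product (Finset.range_mono (by lia)) (Finset.range_mono (by lia)))
    fun p _ _ => XtermSq_nonneg L p.1 p.2 h

lemma XtermSq_le_XnormSq (hk : k' ≤ k) (hm : m' ≤ m) : XtermSq L k' m' h ≤ XnormSq L k m h := by
  rw [XnormSq_eq_sum]
  exact Finset.single_le_sum (f := fun p : ℕ × ℕ => XtermSq L p.1 p.2 h)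
    (fun p _ => XtermSq_nonneg L p.1 p.2 h) (a := (k', m'))
    (by rw [Finset.mem_product, Finset.mem_range, Finset.mem_range]; lia)

lemma sqrt_L2sq_wt_dS_le_Xnorm (hk : k' ≤ k + 1) (hm : m' ≤ m) :
    √(L2sq L (wt m' (dS k' h))) ≤ Xnorm L k m h := by
  refine Real.sqrt_le_sqrt ?_
  rcases k' with _ | j
  · have := XtermSq_le_XnormSq (L := L) (h := h) k.zero_le hm
    rw [XtermSq] at this
    linarith [L2sq_nonneg L (wt m' (dS (0 + 1) h)), L2sq_nonneg L (wt m' (dPsi 1 (dS 0 h))),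
      L2sq_nonneg L (wt m' (dPsi 2 (dS 0 h)))]
  · have := XtermSq_le_XnormSq (L := L) (h := h) (Nat.le_of_succ_le_succ hk) hm
    rw [XtermSq] at this
    linarith [L2sq_nonneg L (wt m' (dS j h)), L2sq_nonneg L (wt m' (dPsi 1 (dS j h))),
      L2sq_nonneg L (wt m' (dPsi 2 (dS j h)))]

lemma integral_abs_wt_dS_mul_abs_wt_dS_le {n i j i' j' : ℕ}
    (hh : MemLp (uncurry (wt j (dS i h))) 2 (stripMeasure L))
    (hg : MemLp (uncurry (wt j' (dS i' g))) 2 (stripMeasure L))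
    (hi : i ≤ k + 1) (hj : j ≤ m) (hi' : i' ≤ k + 1) (hj' : j' ≤ n) :
    ∫ p, |uncurry (wt j (dS i h)) p| * |uncurry (wt j' (dS i' g)) p| ∂stripMeasure L ≤
      Xnorm L k m h * Xnorm L k n g :=
  (integral_abs_mul_abs_le hh hg).trans <| mul_le_mul (sqrt_L2sq_wt_dS_le_Xnorm hi hj)
    (sqrt_L2sq_wt_dS_le_Xnorm hi' hj') (Real.sqrt_nonneg _) (Xnorm_nonneg _ _ _ _)

lemma XFinite.mono (hX : XFinite L k m h) (hk : k' ≤ k) (hm : m' ≤ m) : XFinite L k' m' h :=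
  fun i hi j hj => hX i (hi.trans hk) j (hj.trans hm)

lemma XFinite.finiteL2_wt_dS (hX : XFinite L k m h) (hk : k' ≤ k + 1) (hm : m' ≤ m) :
    FiniteL2 L (wt m' (dS k' h)) := by
  rcases k' with _ | j
  · exact (hX 0 k.zero_le m' hm).1
  · exact (hX j (Nat.le_of_succ_le_succ hk) m' hm).2.1

end XSpace

section Sobolev

lemma abs_sq_sub_sq_le_integral {φ φ' : ℝ → ℝ} {a b t x : ℝ} (hφ : ∀ x, HasDerivAt φ (φ' x) x)
    (hφ' : Continuous φ') (ht : t ∈ Icc a b) (hx : x ∈ Icc a b) :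
    |φ x ^ 2 - φ t ^ 2| ≤ ∫ u in Icc a b, (φ u ^ 2 + φ' u ^ 2) := by
  have hφ_cont : Continuous φ := continuous_iff_continuousAt.2 fun x => (hφ x).continuousAt
  have ftc : ∫ u in t..x, 2 * φ u * φ' u = φ x ^ 2 - φ t ^ 2 :=
    intervalIntegral.integral_eq_sub_of_hasDerivAt
      (fun u _ => by simpa using (hφ u).fun_pow 2)
      ((by fun_prop : Continuous fun u => 2 * φ u * φ' u).intervalIntegrable _ _)
  have amgm (u : ℝ) : ‖2 * φ u * φ' u‖ ≤ φ u ^ 2 + φ' u ^ 2 := by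
    rw [Real.norm_eq_abs, abs_le]
    constructor <;> nlinarith [sq_nonneg (φ u + φ' u), sq_nonneg (φ u - φ' u)]
  have integrable : IntegrableOn (fun u => φ u ^ 2 + φ' u ^ 2) (Icc a b) :=
    (by fun_prop : Continuous fun u => φ u ^ 2 + φ' u ^ 2).integrableOn_Icc
  have subset : uIoc t x ⊆ Icc a b := uIoc_subset_uIcc.trans (uIcc_subset_Icc ht hx)
  rw [← ftc, ← Real.norm_eq_abs]
  calc ‖∫ u in t..x, 2 * φ u * φ' u‖
      = ‖∫ u in uIoc t x, 2 * φ u * φ' u‖ := intervalIntegral.norm_integral_eq_norm_integral_uIoc _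
    _ ≤ ∫ u in uIoc t x, (φ u ^ 2 + φ' u ^ 2) :=
        norm_integral_le_of_norm_le (integrable.mono_set subset) (ae_of_all _ amgm)
    _ ≤ ∫ u in Icc a b, (φ u ^ 2 + φ' u ^ 2) :=
        setIntegral_mono_set integrable (ae_of_all _ fun u => by positivity)
          subset.eventuallyLE

lemma sq_le_mul_integral_sq_add_deriv_sq {φ φ' : ℝ → ℝ} {a b x : ℝ}
    (hφ : ∀ x, HasDerivAt φ (φ' x) x) (hφ' : Continuous φ') (hab : a < b) (hx : x ∈ Icc a b) :
    φ x ^ 2 ≤ (1 / (b - a) + 1) * ∫ u in Ioc a b, (φ u ^ 2 + φ' u ^ 2) := by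
  have hφ_cont : Continuous φ := continuous_iff_continuousAt.2 fun x => (hφ x).continuousAt
  have sq_integrable : IntegrableOn (fun u => φ u ^ 2) (Icc a b) :=
    (hφ_cont.pow 2).integrableOn_Icc
  obtain ⟨t, ht, h_average⟩ : ∃ t ∈ Icc a b, φ t ^ 2 ≤ ⨍ u in Icc a b, φ u ^ 2 :=
    exists_le_setAverage (by simpa using hab) (by simp) sq_integrable
  have h_mono : ∫ u in Icc a b, φ u ^ 2 ≤ ∫ u in Icc a b, (φ u ^ 2 + φ' u ^ 2) :=
    setIntegral_mono sq_integrable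
      (by fun_prop : Continuous fun u => φ u ^ 2 + φ' u ^ 2).integrableOn_Icc
      fun u => le_add_of_nonneg_right (sq_nonneg _)
  have hba : 0 < b - a := sub_pos.2 hab
  rw [setAverage_eq, smul_eq_mul, Measure.real, Real.volume_Icc, ENNReal.toReal_ofReal hba.le]
    at h_average
  rw [← integral_Icc_eq_integral_Ioc]
  calc φ x ^ 2 = φ t ^ 2 + (φ x ^ 2 - φ t ^ 2) := by ring
    _ ≤ (b - a)⁻¹ * (∫ u in Icc a b, (φ u ^ 2 + φ' u ^ 2))
          + ∫ u in Icc a b, (φ u ^ 2 + φ' u ^ 2) := by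
        refine add_le_add (h_average.trans (by gcongr)) ?_
        exact (le_abs_self _).trans (abs_sq_sub_sq_le_integral hφ hφ' ht hx)
    _ = _ := by ring

variable {L s y : ℝ} {h : ℝ → ℝ → ℝ}

lemma integral_sq_trace_le (hh : ContDiff ℝ 1 (uncurry h)) (h_fin : FiniteL2 L h)
    (h_psi_fin : FiniteL2 L (dPsi 1 h)) (hy : 0 ≤ y) :
    ∫ s in Ioc 0 L, h s y ^ 2 ≤ 2 * (L2sq L h + L2sq L (dPsi 1 h)) := by
  have h_cont : Continuous (uncurry h) := hh.continuous
  have psi_cont := continuous_dPsi_one hh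
  let G : ℝ × ℝ → ℝ := fun p => h p.1 p.2 ^ 2 + dPsi 1 h p.1 p.2 ^ 2
  have G_integrable : IntegrableOn G (Ioc 0 L ×ˢ Ioi 0) := h_fin.add h_psi_fin
  have subset : Ioc 0 L ×ˢ Ioc y (y + 1) ⊆ Ioc 0 L ×ˢ Ioi 0 :=
    prod_mono subset_rfl fun t ht => hy.trans_lt ht.1
  have G_integrable_box : IntegrableOn G (Ioc 0 L ×ˢ Ioc y (y + 1)) (volume.prod volume) :=
    G_integrable.mono_set subset
  have fiber (s : ℝ) : h s y ^ 2 ≤ 2 * ∫ t in Ioc y (y + 1), G (s, t) := by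
    have := sq_le_mul_integral_sq_add_deriv_sq
      (hasDerivAt_dPsi_one (hh.differentiable one_ne_zero) s)
      (psi_cont.comp (Continuous.prodMk_right s)) (lt_add_one y) (left_mem_Icc.2 (by simp))
    norm_num at this
    exact this
  calc ∫ s in Ioc 0 L, h s y ^ 2
      ≤ ∫ s in Ioc 0 L, 2 * ∫ t in Ioc y (y + 1), G (s, t) := by
        refine setIntegral_mono ?_ (Integrable.const_mul ?_ 2) fiber
        · exact (((h_cont.comp (Continuous.prodMk_left y)).pow 2).integrableOn_Icc).mono_set
            Ioc_subset_Icc_self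
        · rw [IntegrableOn, ← Measure.prod_restrict] at G_integrable_box
          exact G_integrable_box.integral_prod_left
    _ = 2 * ∫ p in Ioc 0 L ×ˢ Ioc y (y + 1), G p := by
        rw [integral_const_mul, Measure.volume_eq_prod, setIntegral_prod G G_integrable_box]
    _ ≤ 2 * ∫ p in Ioc 0 L ×ˢ Ioi 0, G p := by
        refine mul_le_mul_of_nonneg_left ?_ zero_le_two
        exact setIntegral_mono_set G_integrable (ae_of_all _ fun p => by positivity)
          subset.eventuallyLE
    _ = 2 * (L2sq L h + L2sq L (dPsi 1 h)) := by
        rw [L2sq, L2sq, ← integral_add h_fin h_psi_fin]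

lemma abs_le_mul_Xnorm (hL : 0 < L) (hh : ContDiff ℝ 2 (uncurry h)) (hX : XFinite L 1 0 h)
    (hs : s ∈ Icc 0 L) (hy : 0 ≤ y) : |h s y| ≤ √(2 * (1 / L + 1)) * Xnorm L 1 0 h := by
  have hh_one : ContDiff ℝ 1 (uncurry h) := hh.of_le one_le_two
  have dS_smooth : ContDiff ℝ 1 (uncurry (dS 1 h)) := contDiff_dS_one (n := 1) hh
  obtain ⟨h_fin, -, psi_fin, -⟩ := hX 0 zero_le_one 0 le_rfl
  obtain ⟨dS_fin, -, psi_dS_fin, -⟩ := hX 1 le_rfl 0 le_rfl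
  simp only [wt_zero, dS_zero] at h_fin psi_fin dS_fin psi_dS_fin
  have sq_integrable {g : ℝ → ℝ → ℝ} (hg : ContDiff ℝ 1 (uncurry g)) :
      IntegrableOn (fun t => g t y ^ 2) (Ioc 0 L) :=
    (((hg.continuous.comp (Continuous.prodMk_left y)).pow 2).integrableOn_Icc).mono_set
      Ioc_subset_Icc_self
  have sobolev : h s y ^ 2 ≤ (1 / L + 1) * ∫ t in Ioc 0 L, (h t y ^ 2 + dS 1 h t y ^ 2) := by
    simpa using sq_le_mul_integral_sq_add_deriv_sq
      (fun t => hasDerivAt_dS_one (hh_one.differentiable one_ne_zero) t y)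
      (dS_smooth.continuous.comp (Continuous.prodMk_left y)) hL hs
  rw [integral_add (sq_integrable hh_one) (sq_integrable dS_smooth)] at sobolev
  have norm_ge : L2sq L h + L2sq L (dPsi 1 h) + (L2sq L (dS 1 h) + L2sq L (dPsi 1 (dS 1 h)))
      ≤ XnormSq L 1 0 h := by
    simp only [XnormSq, Finset.sum_range_succ, Finset.sum_range_zero, wt_zero, dS_zero, zero_add]
    linarith [L2sq_nonneg L (dPsi 2 h), L2sq_nonneg L (dS 1 h), L2sq_nonneg L (dS (1 + 1) h),
      L2sq_nonneg L (dPsi 2 (dS 1 h))]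
  rw [Xnorm, ← Real.sqrt_mul (by positivity)]
  refine Real.abs_le_sqrt ?_
  calc h s y ^ 2
      ≤ (1 / L + 1) * (2 * (L2sq L h + L2sq L (dPsi 1 h)) +
          2 * (L2sq L (dS 1 h) + L2sq L (dPsi 1 (dS 1 h)))) := by
        refine sobolev.trans ?_
        gcongr
        · exact integral_sq_trace_le hh_one h_fin psi_fin hy
        · exact integral_sq_trace_le dS_smooth dS_fin psi_dS_fin hy
    _ ≤ 2 * (1 / L + 1) * XnormSq L 1 0 h := by
        rw [← mul_add, ← mul_assoc, mul_comm (1 / L + 1) 2]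
        gcongr

end Sobolev

section Functional

variable {L m ε ω ω₁ ω₂ : ℝ} {q : ℝ → ℝ} {Q Q₁ Q₂ : ℝ → ℝ → ℝ} {p : ℝ × ℝ} {j k : ℕ}

/-- The integrand `y (1/ω - q/u) ∂_s Q` of `Φ` on the strip, the prefactor `1/ω` of `Φ` being
absorbed into the kernel. -/
noncomputable def phiIntegrand (q : ℝ → ℝ) (ω : ℝ) (Q : ℝ → ℝ → ℝ) (p : ℝ × ℝ) : ℝ :=
  p.2 * (phiKernel (q p.1) ω (Q p.1 p.2) * dS 1 Q p.1 p.2)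

/-- Up to a constant, a pointwise bound on the difference of two integrands `phiIntegrand`. The
factor `y` is placed, as the weight `1 + y`, on one factor of each product. -/
noncomputable def phiMajorant (ω₁ ω₂ : ℝ) (Q₁ Q₂ : ℝ → ℝ → ℝ) (p : ℝ × ℝ) : ℝ :=
  |ω₁ - ω₂| * (|uncurry (wt 1 Q₁) p| * |uncurry (dS 1 Q₁) p|)
    + |uncurry (fun s y => Q₁ s y - Q₂ s y) p| * |uncurry (wt 1 (dS 1 Q₁)) p|
    + |uncurry (wt 1 Q₂) p| * |uncurry (dS 1 fun s y => Q₁ s y - Q₂ s y) p|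

lemma PhiFL_eq (hL : 0 ≤ L) (hω : ω ≠ 0) (hI : Integrable (phiIntegrand q ω Q) (stripMeasure L)) :
    PhiFL L q ε Q ω = 1 / ε / (1 / L * ∫ s in (0 : ℝ)..L, q s ^ 3) *
      ∫ p, phiIntegrand q ω Q p ∂stripMeasure L := by
  have inner (y : ℝ) : (y * ∫ s in (0 : ℝ)..L,
        (1 - ω * q s / √(ω ^ 2 * q s ^ 2 + Q s y)) * dS 1 Q s y) =
      ω * ∫ s in Ioc 0 L, phiIntegrand q ω Q (s, y) := by
    rw [intervalIntegral.integral_of_le hL, ← integral_const_mul, ← integral_const_mul]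
    congr 1 with s
    rw [phiIntegrand, phiKernel]
    field_simp
  rw [stripMeasure, Measure.volume_eq_prod, ← Measure.prod_restrict] at hI ⊢
  rw [integral_prod_symm _ hI, PhiFL]
  simp only [inner]
  rw [integral_const_mul]
  field_simp

lemma abs_phiIntegrand_le (hm : 0 < m) (hq : m ≤ q p.1) (hω : 1 / 2 ≤ ω) (hp : 0 < p.2)
    (hQ : |uncurry Q p| ≤ m ^ 2 / 8) :
    |phiIntegrand q ω Q p| ≤ 32 / m ^ 2 * (|uncurry (wt 1 Q) p| * |uncurry (dS 1 Q) p|) := by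
  rw [phiIntegrand, abs_mul, abs_mul, abs_of_pos hp]
  simp only [uncurry, abs_wt_one _ hp]
  calc p.2 * (|phiKernel (q p.1) ω (Q p.1 p.2)| * |dS 1 Q p.1 p.2|)
      ≤ (1 + p.2) * (32 / m ^ 2 * |Q p.1 p.2| * |dS 1 Q p.1 p.2|) := by
        gcongr
        · linarith
        · exact abs_phiKernel_le hm hq hω hQ
    _ = _ := by ring

lemma abs_phiIntegrand_sub_le (hm : 0 < m) (hq : m ≤ q p.1) (hω₁ : 1 / 2 ≤ ω₁) (hω₂ : 1 / 2 ≤ ω₂)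
    (hp : 0 < p.2) (hQ₁ : Differentiable ℝ (uncurry Q₁)) (hQ₂ : Differentiable ℝ (uncurry Q₂))
    (hQ₁_small : |uncurry Q₁ p| ≤ m ^ 2 / 8) (hQ₂_small : |uncurry Q₂ p| ≤ m ^ 2 / 8) :
    |phiIntegrand q ω₁ Q₁ p - phiIntegrand q ω₂ Q₂ p| ≤
      192 / m ^ 2 * phiMajorant ω₁ ω₂ Q₁ Q₂ p := by
  have kernel := abs_phiKernel_mul_sub_le hm hq hω₁ hω₂ hQ₁_small hQ₂_small
    (dS 1 Q₁ p.1 p.2) (dS 1 Q₂ p.1 p.2)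
  rw [phiIntegrand, phiIntegrand, ← mul_sub, abs_mul, abs_of_pos hp]
  simp only [phiMajorant, uncurry, abs_wt_one _ hp, dS_one_sub hQ₁ hQ₂]
  refine (mul_le_mul (by linarith : p.2 ≤ 1 + p.2) kernel (abs_nonneg _) (by linarith)).trans_eq ?_
  simp only [uncurry]
  ring

lemma memLp_wt_dS (hQ : ContDiff ℝ 1 (uncurry Q)) (hX : XFinite L 0 k Q) (hj : j ≤ k) {i : ℕ}
    (hi : i ≤ 1) : MemLp (uncurry (wt j (dS i Q))) 2 (stripMeasure L) := by
  refine (hX.finiteL2_wt_dS hi hj).memLp (continuous_wt j ?_)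
  interval_cases i
  · simpa only [dS_zero] using hQ.continuous
  · exact continuous_dS_one hQ

lemma integrable_phiIntegrand (hm : 0 < m) (hq : Measurable q)
    (hqm : ∀ s ∈ Ioc 0 L, m ≤ q s) (hω : 1 / 2 ≤ ω) (hQ : ContDiff ℝ 1 (uncurry Q))
    (hX : XFinite L 0 1 Q) (hQ_small : ∀ p ∈ Ioc 0 L ×ˢ Ioi 0, |uncurry Q p| ≤ m ^ 2 / 8) :
    Integrable (phiIntegrand q ω Q) (stripMeasure L) := by
  have wt_memLp := memLp_wt_dS hQ hX le_rfl zero_le_one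
  have dS_memLp := memLp_wt_dS hQ hX zero_le_one le_rfl
  rw [dS_zero] at wt_memLp
  rw [wt_zero] at dS_memLp
  have Q_meas : Measurable (uncurry Q) := hQ.continuous.measurable
  have dS_meas : Measurable (uncurry (dS 1 Q)) := (continuous_dS_one hQ).measurable
  have kernel_meas : Measurable fun p : ℝ × ℝ => phiKernel (q p.1) ω (uncurry Q p) := by
    unfold phiKernel
    fun_prop
  refine ((wt_memLp.abs.integrable_mul dS_memLp.abs).const_mul (32 / m ^ 2)).mono'
    (measurable_snd.mul (kernel_meas.mul dS_meas)).aestronglyMeasurable ?_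
  refine ae_restrict_of_forall_mem (measurableSet_Ioc.prod measurableSet_Ioi) fun p hp => ?_
  exact abs_phiIntegrand_le hm (hqm p.1 hp.1) hω hp.2 (hQ_small p hp)

lemma memLp_wt_zero_dS_sub (hQ₁ : ContDiff ℝ 1 (uncurry Q₁)) (hQ₂ : ContDiff ℝ 1 (uncurry Q₂))
    (hX₁ : XFinite L 0 k Q₁) (hX₂ : XFinite L 0 k Q₂) {i : ℕ} (hi : i ≤ 1) :
    MemLp (uncurry (wt 0 (dS i fun s y => Q₁ s y - Q₂ s y))) 2 (stripMeasure L) := by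
  have dS_sub : uncurry (wt 0 (dS i fun s y => Q₁ s y - Q₂ s y)) =
      uncurry (wt 0 (dS i Q₁)) - uncurry (wt 0 (dS i Q₂)) := by
    funext p
    interval_cases i
    · simp only [wt_zero, dS_zero, uncurry, Pi.sub_apply]
    · simp only [wt_zero, Pi.sub_apply]
      exact dS_one_sub (hQ₁.differentiable one_ne_zero) (hQ₂.differentiable one_ne_zero) p.1 p.2
  rw [dS_sub]
  exact (memLp_wt_dS hQ₁ hX₁ k.zero_le hi).sub (memLp_wt_dS hQ₂ hX₂ k.zero_le hi)

lemma phiMajorant_integrable_and_integral_le (hQ₁ : ContDiff ℝ 1 (uncurry Q₁))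
    (hQ₂ : ContDiff ℝ 1 (uncurry Q₂)) (hX₁ : XFinite L 0 1 Q₁) (hX₂ : XFinite L 0 1 Q₂) :
    Integrable (phiMajorant ω₁ ω₂ Q₁ Q₂) (stripMeasure L) ∧
    ∫ p, phiMajorant ω₁ ω₂ Q₁ Q₂ p ∂stripMeasure L ≤
      |ω₁ - ω₂| * (Xnorm L 0 1 Q₁ * Xnorm L 0 1 Q₁) +
        Xnorm L 0 0 (fun s y => Q₁ s y - Q₂ s y) * Xnorm L 0 1 Q₁ +
        Xnorm L 0 1 Q₂ * Xnorm L 0 0 (fun s y => Q₁ s y - Q₂ s y) := by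
  have wt_Q₁ := memLp_wt_dS hQ₁ hX₁ le_rfl zero_le_one
  have dS_Q₁ := memLp_wt_dS hQ₁ hX₁ zero_le_one le_rfl
  have wt_dS_Q₁ := memLp_wt_dS hQ₁ hX₁ le_rfl le_rfl
  have wt_Q₂ := memLp_wt_dS hQ₂ hX₂ le_rfl zero_le_one
  have sub := memLp_wt_zero_dS_sub hQ₁ hQ₂ hX₁ hX₂ zero_le_one
  have dS_sub := memLp_wt_zero_dS_sub hQ₁ hQ₂ hX₁ hX₂ le_rfl
  have B₁ := integral_abs_wt_dS_mul_abs_wt_dS_le (k := 0) wt_Q₁ dS_Q₁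
    zero_le_one (le_refl 1) le_rfl zero_le_one
  have B₂ := integral_abs_wt_dS_mul_abs_wt_dS_le (k := 0) sub wt_dS_Q₁
    zero_le_one (le_refl 0) le_rfl (le_refl 1)
  have B₃ := integral_abs_wt_dS_mul_abs_wt_dS_le (k := 0) wt_Q₂ dS_sub
    zero_le_one (le_refl 1) le_rfl (le_refl 0)
  have I₁ := (integrable_abs_mul_abs wt_Q₁ dS_Q₁).const_mul |ω₁ - ω₂|
  have I₂ := integrable_abs_mul_abs sub wt_dS_Q₁
  have I₃ := integrable_abs_mul_abs wt_Q₂ dS_sub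
  simp only [wt_zero, dS_zero] at B₁ B₂ B₃ I₁ I₂ I₃
  refine ⟨(I₁.add I₂).add I₃, ?_⟩
  simp only [phiMajorant]
  rw [integral_add (I₁.fun_add I₂) I₃, integral_add I₁ I₂, integral_const_mul]
  gcongr

lemma integral_pow_three_pos (hL : 0 < L) (hq : Continuous q) (hq_pos : ∀ s ∈ Ioc 0 L, 0 < q s) :
    0 < ∫ s in (0 : ℝ)..L, q s ^ 3 :=
  intervalIntegral.intervalIntegral_pos_of_pos_on ((hq.pow 3).intervalIntegrable _ _)
    (fun s hs => pow_pos (hq_pos s (Ioo_subset_Ioc_self hs)) 3) hL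

lemma abs_PhiFL_sub_le (hL : 0 < L) (hε : 0 < ε) (hm : 0 < m) (hq : Continuous q)
    (hqm : ∀ s ∈ Ioc 0 L, m ≤ q s) (hω₁ : 1 / 2 ≤ ω₁) (hω₂ : 1 / 2 ≤ ω₂)
    (hQ₁ : ContDiff ℝ 1 (uncurry Q₁)) (hQ₂ : ContDiff ℝ 1 (uncurry Q₂))
    (hX₁ : XFinite L 0 1 Q₁) (hX₂ : XFinite L 0 1 Q₂)
    (hQ₁_small : ∀ p ∈ Ioc 0 L ×ˢ Ioi 0, |uncurry Q₁ p| ≤ m ^ 2 / 8)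
    (hQ₂_small : ∀ p ∈ Ioc 0 L ×ˢ Ioi 0, |uncurry Q₂ p| ≤ m ^ 2 / 8) :
    |PhiFL L q ε Q₁ ω₁ - PhiFL L q ε Q₂ ω₂| ≤
      1 / ε / (1 / L * ∫ s in (0 : ℝ)..L, q s ^ 3) * (192 / m ^ 2 *
        (|ω₁ - ω₂| * (Xnorm L 0 1 Q₁ * Xnorm L 0 1 Q₁) +
          Xnorm L 0 0 (fun s y => Q₁ s y - Q₂ s y) * Xnorm L 0 1 Q₁ +
          Xnorm L 0 1 Q₂ * Xnorm L 0 0 (fun s y => Q₁ s y - Q₂ s y))) := by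
  have cube_pos := integral_pow_three_pos hL hq fun s hs => hm.trans_le (hqm s hs)
  have I₁ := integrable_phiIntegrand hm hq.measurable hqm hω₁ hQ₁ hX₁ hQ₁_small
  have I₂ := integrable_phiIntegrand hm hq.measurable hqm hω₂ hQ₂ hX₂ hQ₂_small
  obtain ⟨majorant_integrable, majorant_le⟩ :=
    phiMajorant_integrable_and_integral_le (ω₁ := ω₁) (ω₂ := ω₂) hQ₁ hQ₂ hX₁ hX₂
  have pointwise : ∀ᵐ p ∂stripMeasure L, ‖phiIntegrand q ω₁ Q₁ p - phiIntegrand q ω₂ Q₂ p‖ ≤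
      192 / m ^ 2 * phiMajorant ω₁ ω₂ Q₁ Q₂ p :=
    ae_restrict_of_forall_mem (measurableSet_Ioc.prod measurableSet_Ioi) fun p hp =>
      abs_phiIntegrand_sub_le hm (hqm p.1 hp.1) hω₁ hω₂ hp.2 (hQ₁.differentiable one_ne_zero)
        (hQ₂.differentiable one_ne_zero) (hQ₁_small p hp) (hQ₂_small p hp)
  rw [PhiFL_eq hL.le (by linarith) I₁, PhiFL_eq hL.le (by linarith) I₂, ← mul_sub,
    ← integral_sub I₁ I₂, abs_mul, abs_of_pos (a := 1 / ε / _) (by positivity)]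
  gcongr
  refine (norm_integral_le_of_norm_le (majorant_integrable.const_mul _) pointwise).trans ?_
  rw [integral_const_mul]
  gcongr

end Functional

section Smallness

variable {ε a b δ δ₁ δ₂ ω₁ ω₂ ωbar₁ ωbar₂ : ℝ}

lemma abs_sub_le_of_sq_eq (hε : 0 ≤ ε) (hω₁ : 1 / 2 ≤ ω₁) (hω₂ : 1 / 2 ≤ ω₂)
    (h₁ : ω₁ ^ 2 = 1 - ε * ωbar₁) (h₂ : ω₂ ^ 2 = 1 - ε * ωbar₂) :
    |ω₁ - ω₂| ≤ ε * |ωbar₁ - ωbar₂| :=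
  calc |ω₁ - ω₂| = |ω₁ - ω₂| * 1 := (mul_one _).symm
    _ ≤ |ω₁ - ω₂| * (ω₁ + ω₂) := by gcongr; linarith
    _ = |(ω₁ - ω₂) * (ω₁ + ω₂)| := by rw [abs_mul, abs_of_pos (a := ω₁ + ω₂) (by linarith)]
    _ = |ε * (ωbar₂ - ωbar₁)| := by congr 1; linear_combination h₁ - h₂
    _ = ε * |ωbar₁ - ωbar₂| := by rw [abs_mul, abs_of_nonneg hε, abs_sub_comm]

open scoped Topology in
lemma eventually_mul_rpow_le (c : ℝ) (ha : 0 < a) (hδ : 0 < δ) :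
    ∀ᶠ ε in 𝓝[>] (0 : ℝ), c * ε ^ a ≤ δ := by
  have : Tendsto (fun ε : ℝ => c * ε ^ a) (𝓝 0) (𝓝 (c * 0 ^ a)) :=
    (Real.continuousAt_rpow_const 0 a (.inr ha.le)).tendsto.const_mul c
  rw [Real.zero_rpow ha.ne', mul_zero] at this
  exact (this.mono_left nhdsWithin_le_nhds).eventually_le_const hδ

lemma exists_forall_mul_rpow_le (c₁ c₂ : ℝ) (ha : 0 < a) (hb : 0 < b) (hδ₁ : 0 < δ₁)
    (hδ₂ : 0 < δ₂) :
    ∃ ε₀ : ℝ, 0 < ε₀ ∧ ε₀ < 1 ∧ ∀ ε ∈ Ioo 0 ε₀, c₁ * ε ^ a ≤ δ₁ ∧ c₂ * ε ^ b ≤ δ₂ := by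
  obtain ⟨ε₀, ⟨hε₀, hε₀_le⟩, subset⟩ := (mem_nhdsGT_iff_exists_mem_Ioc_Ioo_subset one_half_pos).1
    ((eventually_mul_rpow_le c₁ ha hδ₁).and (eventually_mul_rpow_le c₂ hb hδ₂))
  exact ⟨ε₀, hε₀, hε₀_le.trans_lt one_half_lt_one, subset⟩

lemma div_mul_add_le_rpow {K W D X₁ X₂ w : ℝ} (hε : 0 < ε) (hK : 0 ≤ K)
    (hK_small : 2 * K * ε ^ (0.01 : ℝ) ≤ 1)
    (hw : 0 ≤ w) (hW : W ≤ ε * w) (hD : 0 ≤ D) (hX₁ : 0 ≤ X₁) (hX₁_small : X₁ ≤ ε ^ (0.99 : ℝ))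
    (hX₂_small : X₂ ≤ ε ^ (0.99 : ℝ)) :
    K / ε * (W * (X₁ * X₁) + D * X₁ + X₂ * D) ≤ ε ^ (1.97 : ℝ) * w + ε ^ (-0.02 : ℝ) * D := by
  have sq_rpow : ε ^ (0.99 : ℝ) * ε ^ (0.99 : ℝ) = ε ^ (1.97 : ℝ) * ε ^ (0.01 : ℝ) := by
    rw [← Real.rpow_add hε, ← Real.rpow_add hε]
    norm_num
  have rpow_div : ε ^ (0.99 : ℝ) = ε * (ε ^ (-0.02 : ℝ) * ε ^ (0.01 : ℝ)) := by
    rw [← Real.rpow_add hε, ← Real.rpow_one_add' hε.le (by norm_num)]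
    norm_num
  calc K / ε * (W * (X₁ * X₁) + D * X₁ + X₂ * D)
      ≤ K / ε * (ε * w * (ε ^ (0.99 : ℝ) * ε ^ (0.99 : ℝ)) + D * ε ^ (0.99 : ℝ) +
          ε ^ (0.99 : ℝ) * D) := by gcongr
    _ = K * ε ^ (0.01 : ℝ) * (ε ^ (1.97 : ℝ) * w) +
          2 * K * ε ^ (0.01 : ℝ) * (ε ^ (-0.02 : ℝ) * D) := by
        rw [sq_rpow, rpow_div]
        field_simp
        ring
    _ ≤ 1 * (ε ^ (1.97 : ℝ) * w) + 1 * (ε ^ (-0.02 : ℝ) * D) := by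
        gcongr
        refine le_trans ?_ hK_small
        have : 0 ≤ K * ε ^ (0.01 : ℝ) := by positivity
        linarith
    _ = ε ^ (1.97 : ℝ) * w + ε ^ (-0.02 : ℝ) * D := by rw [one_mul, one_mul]

end Smallness

section Contraction

variable {L m ε ω₁ ω₂ ωbar₁ ωbar₂ : ℝ} {q : ℝ → ℝ} {Q Q₁ Q₂ : ℝ → ℝ → ℝ}

lemma forall_strip_abs_le_of_Xnorm_le {r c : ℝ} (hL : 0 < L) (hQ : ContDiff ℝ 2 (uncurry Q))
    (hX : XFinite L 1 0 Q) (hX_le : Xnorm L 1 0 Q ≤ r) (hr : √(2 * (1 / L + 1)) * r ≤ c) :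
    ∀ p ∈ Ioc 0 L ×ˢ Ioi 0, |uncurry Q p| ≤ c := fun p hp =>
  calc |uncurry Q p| ≤ √(2 * (1 / L + 1)) * Xnorm L 1 0 Q :=
        abs_le_mul_Xnorm hL hQ hX (Ioc_subset_Icc_self hp.1) (le_of_lt hp.2)
    _ ≤ √(2 * (1 / L + 1)) * r := by gcongr
    _ ≤ c := hr

lemma abs_PhiFL_sub_le_rpow (hL : 0 < L) (hε : 0 < ε) (hm : 0 < m) (hq : Continuous q)
    (hqm : ∀ s ∈ Ioc 0 L, m ≤ q s)
    (hε_const : 2 * (192 / m ^ 2 / (1 / L * ∫ s in (0 : ℝ)..L, q s ^ 3)) * ε ^ (0.01 : ℝ) ≤ 1)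
    (hε_sobolev : √(2 * (1 / L + 1)) * ε ^ (0.99 : ℝ) ≤ m ^ 2 / 8)
    (hω₁ : 1 / 2 ≤ ω₁) (hω₂ : 1 / 2 ≤ ω₂)
    (hω₁_sq : ω₁ ^ 2 = 1 - ε * ωbar₁) (hω₂_sq : ω₂ ^ 2 = 1 - ε * ωbar₂)
    (hQ₁ : ContDiff ℝ 2 (uncurry Q₁)) (hX₁ : XFinite L 1 1 Q₁)
    (hX₁_le : Xnorm L 1 1 Q₁ ≤ ε ^ (0.99 : ℝ))
    (hQ₂ : ContDiff ℝ 2 (uncurry Q₂)) (hX₂ : XFinite L 1 1 Q₂)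
    (hX₂_le : Xnorm L 1 1 Q₂ ≤ ε ^ (0.99 : ℝ)) :
    |PhiFL L q ε Q₁ ω₁ - PhiFL L q ε Q₂ ω₂| ≤ ε ^ (1.97 : ℝ) * |ωbar₁ - ωbar₂| +
      ε ^ (-0.02 : ℝ) * Xnorm L 0 0 (fun s y => Q₁ s y - Q₂ s y) := by
  have cube_pos := integral_pow_three_pos hL hq fun s hs => hm.trans_le (hqm s hs)
  have small {Q : ℝ → ℝ → ℝ} (hQ : ContDiff ℝ 2 (uncurry Q)) (hX : XFinite L 1 1 Q)
      (hX_le : Xnorm L 1 1 Q ≤ ε ^ (0.99 : ℝ)) :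
      ∀ p ∈ Ioc 0 L ×ˢ Ioi 0, |uncurry Q p| ≤ m ^ 2 / 8 :=
    forall_strip_abs_le_of_Xnorm_le hL hQ (hX.mono le_rfl zero_le_one)
      ((Xnorm_mono le_rfl zero_le_one).trans hX_le) hε_sobolev
  refine (abs_PhiFL_sub_le hL hε hm hq hqm hω₁ hω₂ (hQ₁.of_le one_le_two) (hQ₂.of_le one_le_two)
    (hX₁.mono zero_le_one le_rfl) (hX₂.mono zero_le_one le_rfl) (small hQ₁ hX₁ hX₁_le)
    (small hQ₂ hX₂ hX₂_le)).trans ?_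
  convert! div_mul_add_le_rpow hε (by positivity) hε_const (abs_nonneg _)
    (abs_sub_le_of_sq_eq hε.le hω₁ hω₂ hω₁_sq hω₂_sq) (Xnorm_nonneg _ _ _ _)
    (Xnorm_nonneg _ _ _ _) ((Xnorm_mono zero_le_one le_rfl).trans hX₁_le)
    ((Xnorm_mono zero_le_one le_rfl).trans hX₂_le) using 1
  ring

theorem phi_contraction_estimate_general {L : ℝ} (hL : 0 < L) {q : ℝ → ℝ} (hq : Continuous q)
    (hq_pos : ∀ s ∈ Icc 0 L, 0 < q s) :
    ∃ ε₀ : ℝ, 0 < ε₀ ∧ ε₀ < 1 ∧ ∀ ε : ℝ, 0 < ε → ε < ε₀ →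
      ∀ ω₁ ω₂ ωbar₁ ωbar₂ : ℝ, 1 / 2 ≤ ω₁ → 1 / 2 ≤ ω₂ →
        ω₁ ^ 2 = 1 - ε * ωbar₁ → ω₂ ^ 2 = 1 - ε * ωbar₂ →
      ∀ Q₁ Q₂ : ℝ → ℝ → ℝ,
        ContDiff ℝ 2 (uncurry Q₁) → XFinite L 1 1 Q₁ → Xnorm L 1 1 Q₁ ≤ ε ^ (0.99 : ℝ) →
        ContDiff ℝ 2 (uncurry Q₂) → XFinite L 1 1 Q₂ → Xnorm L 1 1 Q₂ ≤ ε ^ (0.99 : ℝ) →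
        |PhiFL L q ε Q₁ ω₁ - PhiFL L q ε Q₂ ω₂| ≤ ε ^ (1.97 : ℝ) * |ωbar₁ - ωbar₂| +
          ε ^ (-0.02 : ℝ) * Xnorm L 0 0 (fun s y => Q₁ s y - Q₂ s y) := by
  obtain ⟨s₀, hs₀, hs₀_min⟩ :=
    isCompact_Icc.exists_isMinOn (nonempty_Icc.2 hL.le) hq.continuousOn
  have hm : 0 < q s₀ := hq_pos s₀ hs₀
  have hqm (s : ℝ) (hs : s ∈ Ioc 0 L) : q s₀ ≤ q s := hs₀_min (Ioc_subset_Icc_self hs)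
  obtain ⟨ε₀, hε₀, hε₀_lt, small⟩ := exists_forall_mul_rpow_le
    (2 * (192 / q s₀ ^ 2 / (1 / L * ∫ s in (0 : ℝ)..L, q s ^ 3))) √(2 * (1 / L + 1))
    (by norm_num : (0 : ℝ) < 0.01) (by norm_num : (0 : ℝ) < 0.99) one_pos
    (by positivity : 0 < q s₀ ^ 2 / 8)
  refine ⟨ε₀, hε₀, hε₀_lt, fun ε hε hεε₀ ω₁ ω₂ ωbar₁ ωbar₂ hω₁ hω₂ hω₁_sq hω₂_sq Q₁ Q₂
    hQ₁ hX₁ hX₁_le hQ₂ hX₂ hX₂_le => ?_⟩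
  obtain ⟨hε_const, hε_sobolev⟩ := small ε ⟨hε, hεε₀⟩
  exact abs_PhiFL_sub_le_rpow hL hε hm hq hqm hε_const hε_sobolev hω₁ hω₂ hω₁_sq hω₂_sq
    hQ₁ hX₁ hX₁_le hQ₂ hX₂ hX₂_le

end Contraction

/-- **Lipschitz-type contraction estimate on the selection functional `Φ`.** -/
theorem phi_contraction_estimate
    (L : ℝ) (hL : 0 < L)
    (q_e : ℝ → ℝ) (hqe : ContDiff ℝ (⊤ : ℕ∞) q_e) (hqeper : Function.Periodic q_e L)
    (hqepos : ∀ s, 0 < q_e s)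
    (C₀ : ℝ) (hC₀ : 0 < C₀) :
    ∃ ε₀ : ℝ, 0 < ε₀ ∧ ε₀ < 1 ∧
      ∀ ε : ℝ, 0 < ε → ε < ε₀ →
      ∀ ω₁ ω₂ ωbar₁ ωbar₂ : ℝ,
        1/2 ≤ ω₁ → ω₁ ≤ 2 → 1/2 ≤ ω₂ → ω₂ ≤ 2 →
        ω₁ ^ 2 = 1 - ε * ωbar₁ → ω₂ ^ 2 = 1 - ε * ωbar₂ →
        |ωbar₁| ≤ C₀ → |ωbar₂| ≤ C₀ →
      ∀ Q₁ Q₂ : ℝ → ℝ → ℝ,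
        Smooth2 Q₁ → PeriodicS L Q₁ → XFinite L 2 50 Q₁ →
        Xnorm L 2 50 Q₁ ≤ ε ^ (0.99 : ℝ) →
        Smooth2 Q₂ → PeriodicS L Q₂ → XFinite L 2 50 Q₂ →
        Xnorm L 2 50 Q₂ ≤ ε ^ (0.99 : ℝ) →
        |PhiFL L q_e ε Q₁ ω₁ - PhiFL L q_e ε Q₂ ω₂|
          ≤ ε ^ (1.97 : ℝ) * |ωbar₁ - ωbar₂|
            + ε ^ (-0.02 : ℝ) * Xnorm L 1 4 (fun s ψ => Q₁ s ψ - Q₂ s ψ) := by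
  obtain ⟨ε₀, hε₀, hε₀_lt, estimate⟩ :=
    phi_contraction_estimate_general hL hqe.continuous fun s _ => hqepos s
  refine ⟨ε₀, hε₀, hε₀_lt, fun ε hε hεε₀ ω₁ ω₂ ωbar₁ ωbar₂ hω₁ _ hω₂ _ hω₁_sq hω₂_sq _ _ Q₁ Q₂
    hQ₁ _ hX₁ hX₁_le hQ₂ _ hX₂ hX₂_le => ?_⟩
  refine (estimate ε hε hεε₀ ω₁ ω₂ ωbar₁ ωbar₂ hω₁ hω₂ hω₁_sq hω₂_sq Q₁ Q₂
    hQ₁.contDiff_two (hX₁.mono one_le_two (by simp))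
    ((Xnorm_mono one_le_two (by simp)).trans hX₁_le)
    hQ₂.contDiff_two (hX₂.mono one_le_two (by simp))
    ((Xnorm_mono one_le_two (by simp)).trans hX₂_le)).trans ?_
  gcongr
  exact Xnorm_mono zero_le_one (by simp)
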